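/- Let x > 0 and X* ∈ L⁰₊. Then X* solves the risk minimization problem (i.e., X* ∈ 𝒳(x) and h(X*) = γ₁(x)) if and only if there exists λ* > 0 such that (i) X* minimizes h(X) + λ*·E[ρX] over all X ∈ L⁰₊ and (ii) E[ρX*] = x. Moreover, in that case −λ* is a subgradient of γ₁ at x: γ₁(y) ≥ γ₁(x) − λ*·(y − x) for all y > 0. -/

import Mathlib

/-!
The weighted entropic risk `h` is convex by Hölder's inequality and the budget `E[ρX]` is additive,
so on payoffs of finite price risk minimization is a convex program with one real constraint.

The payoff `δ / ρ` is almost surely positive and costs exactly `E[ρ · δ / ρ] = δ`, while `h` is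
strictly decreasing. Hence a minimizer over the capital `x` spends all of `x`, and more capital
strictly lowers the risk, which makes the multiplier positive. The multiplier separates the slopes
`(h(X*) - h(Z)) / (E[ρZ] - x)` of the over-budget payoffs `Z` from the slopes
`(h(Y) - h(X*)) / (x - E[ρY])` of the under-budget payoffs `Y`. A payoff of infinite price has
an infinite Lagrangian objective and never competes.

The real infimum `γ₁(x)` is a lower bound only because `h` is bounded below on `𝒳(x)`, which
follows from a weighted Jensen inequality for `E[e^{-a₁X}]`.

Conversely, minimality of `h + λ E[ρ ·]` at `X*` says `h(X*) - λ(y - x) ≤ h(Y)` whenever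
`E[ρY] ≤ y`; `y = x` is optimality, and the infimum over `Y` is the subgradient inequality.
-/

open MeasureTheory Filter Set
open scoped ENNReal

noncomputable section

variable {Ω : Type*} [MeasurableSpace Ω]

/-- Entropic risk measure `h_a(X) = (1/a) log E[e^{-aX}]`. -/
def entropic (P : Measure Ω) (a : ℝ) (X : Ω → ℝ) : ℝ :=
  (1 / a) * Real.log (∫ ω, Real.exp (-a * X ω) ∂P)

/-- Weighted entropic risk measure `h(X) = ∫_{[a₀,a₁]} h_a(X) m(da)`. -/
def werm (P : Measure Ω) (m : Measure ℝ) (a₀ a₁ : ℝ) (X : Ω → ℝ) : ℝ :=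
  ∫ a in Set.Icc a₀ a₁, entropic P a X ∂m

/-- Marginal risk density transform `h′(X) = -∫_{[a₀,a₁]} e^{-aX}/E[e^{-aX}] m(da)`. -/
def hprime (P : Measure Ω) (m : Measure ℝ) (a₀ a₁ : ℝ) (X : Ω → ℝ) (ω : Ω) : ℝ :=
  -∫ a in Set.Icc a₀ a₁, Real.exp (-a * X ω) / (∫ ω', Real.exp (-a * X ω') ∂P) ∂m

/-- Extended-real-valued expectation `E[f] = ∫ f⁺ - ∫ f⁻ ∈ [-∞,∞]`. -/
def eint (P : Measure Ω) (f : Ω → ℝ) : EReal :=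
  ((∫⁻ ω, ENNReal.ofReal (f ω) ∂P : ℝ≥0∞) : EReal)
    - ((∫⁻ ω, ENNReal.ofReal (-(f ω)) ∂P : ℝ≥0∞) : EReal)

/-- `E[ρX] ∈ [0,∞]` for a nonnegative payoff. -/
def budget (P : Measure Ω) (ρ X : Ω → ℝ) : ℝ≥0∞ := ∫⁻ ω, ENNReal.ofReal (ρ ω * X ω) ∂P

/-- `X ∈ L⁰₊`: a nonnegative random variable. -/
def Lpos (P : Measure Ω) (X : Ω → ℝ) : Prop := Measurable X ∧ ∀ᵐ ω ∂P, 0 ≤ X ω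

/-- Objective of the Lagrangian risk-minimization problem: `h(X) + λ E[ρX]`. -/
def robj (P : Measure Ω) (m : Measure ℝ) (a₀ a₁ : ℝ) (ρ : Ω → ℝ) (lam : ℝ) (X : Ω → ℝ) : EReal :=
  ((werm P m a₀ a₁ X : ℝ) : EReal) + (lam : EReal) * ((budget P ρ X : ℝ≥0∞) : EReal)

/-- `ψ_X(y) = ∫_{[a₀,a₁]} e^{-ay} / E[e^{-aX}] m(da)`. -/
def psi (P : Measure Ω) (m : Measure ℝ) (a₀ a₁ : ℝ) (X : Ω → ℝ) (y : ℝ) : ℝ :=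
  ∫ a in Set.Icc a₀ a₁, Real.exp (-a * y) / (∫ ω, Real.exp (-a * X ω) ∂P) ∂m

/-- Inverse of `ψ_X` on `(0,∞)` (realized via `sSup`, since `ψ_X` is continuous, strictly
decreasing with limits `∞` at `-∞` and `0` at `∞`). -/
def psiInv (P : Measure Ω) (m : Measure ℝ) (a₀ a₁ : ℝ) (X : Ω → ℝ) (z : ℝ) : ℝ :=
  sSup {y : ℝ | z ≤ psi P m a₀ a₁ X y}

/-- The transform `𝐓X = max(ψ_X⁻¹(λρ), 0)`. -/
def Ttrans (P : Measure Ω) (m : Measure ℝ) (a₀ a₁ lam : ℝ) (ρ : Ω → ℝ) (X : Ω → ℝ) : Ω → ℝ :=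
  fun ω => max (psiInv P m a₀ a₁ X (lam * ρ ω)) 0

/-- `X ∈ 𝒳(x)`: nonnegative and `E[ρX] ≤ x`. -/
def feasible (P : Measure Ω) (ρ : Ω → ℝ) (x : ℝ) (X : Ω → ℝ) : Prop :=
  Lpos P X ∧ budget P ρ X ≤ ENNReal.ofReal x

/-- `γ₁(x)`: the minimal value of `h` over `𝒳(x)`. -/
def gamma1 (P : Measure Ω) (m : Measure ℝ) (a₀ a₁ : ℝ) (ρ : Ω → ℝ) (x : ℝ) : ℝ :=
  sInf (werm P m a₀ a₁ '' {X | feasible P ρ x X})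

/-- Expected utility `E[U(X)] ∈ [-∞,∞]`. -/
def eutil (P : Measure Ω) (U : ℝ → ℝ) (X : Ω → ℝ) : EReal := eint P (fun ω => U (X ω))

/-- Full Lagrangian objective `E[U(X)] - μ h(X) - λ E[ρX]`. -/
def fullObj (P : Measure Ω) (m : Measure ℝ) (a₀ a₁ : ℝ) (ρ : Ω → ℝ) (U : ℝ → ℝ)
    (μ lam : ℝ) (X : Ω → ℝ) : EReal :=
  eutil P U X - ((μ * werm P m a₀ a₁ X : ℝ) : EReal)
    - (lam : EReal) * ((budget P ρ X : ℝ≥0∞) : EReal)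

/-! ### Convex programs with one constraint -/

/-- Every mixture of a point with `g < c` and a point with `g > c` that meets the constraint is
feasible, so the slopes `(v - f z) / (g z - c)` of the latter lie below the slopes
`(f y - v) / (c - g y)` of the former; any number in between is a multiplier. -/
lemma exists_pos_multiplier {E : Type*} [AddCommMonoid E] [Module ℝ E] {s : Set E} {f g : E → ℝ}
    (hf : ConvexOn ℝ s f) (hg : ConvexOn ℝ s g) {c v : ℝ} (hv : ∀ y ∈ s, g y ≤ c → v ≤ f y)
    (hslater : ∃ y ∈ s, g y < c) (himprove : ∃ z ∈ s, f z < v) :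
    ∃ lam : ℝ, 0 < lam ∧ ∀ y ∈ s, v ≤ f y + lam * (g y - c) := by
  have slope_le_slope : ∀ z ∈ s, c < g z → ∀ y ∈ s, g y < c →
      (v - f z) / (g z - c) ≤ (f y - v) / (c - g y) := by
    intro z hz hcz y hy hyc
    have hd : 0 < g z - g y := by linarith
    have ht : 0 ≤ (g z - c) / (g z - g y) := div_nonneg (by linarith) hd.le
    have hr : 0 ≤ (c - g y) / (g z - g y) := div_nonneg (by linarith) hd.le
    have htr : (g z - c) / (g z - g y) + (c - g y) / (g z - g y) = 1 := by field_simp; ring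
    have hmix : v ≤ (g z - c) / (g z - g y) * f y + (c - g y) / (g z - g y) * f z := by
      refine (hv _ (hf.1 hy hz ht hr htr) ?_).trans (hf.2 hy hz ht hr htr)
      refine (hg.2 hy hz ht hr htr).trans_eq ?_
      simp only [smul_eq_mul]
      field_simp
      ring
    rw [div_mul_eq_mul_div, div_mul_eq_mul_div, ← add_div, le_div_iff₀ hd] at hmix
    rw [div_le_div_iff₀ (by linarith) (by linarith)]
    linarith
  obtain ⟨y₀, hy₀, hy₀c⟩ := hslater
  obtain ⟨z₀, hz₀, hz₀v⟩ := himprove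
  have hcz₀ : c < g z₀ := lt_of_not_ge fun h => (hv z₀ hz₀ h).not_gt hz₀v
  obtain ⟨lam, hlower, hupper⟩ := exists_between_of_forall_le
    (s := (fun z => (v - f z) / (g z - c)) '' {z ∈ s | c < g z})
    (t := (fun y => (f y - v) / (c - g y)) '' {y ∈ s | g y < c})
    ⟨_, z₀, ⟨hz₀, hcz₀⟩, rfl⟩ ⟨_, y₀, ⟨hy₀, hy₀c⟩, rfl⟩ (by
      rintro _ ⟨z, ⟨hz, hcz⟩, rfl⟩ _ ⟨y, ⟨hy, hyc⟩, rfl⟩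
      exact slope_le_slope z hz hcz y hy hyc)
  refine ⟨lam, (div_pos (sub_pos.mpr hz₀v) (sub_pos.mpr hcz₀)).trans_le
    (hlower ⟨z₀, ⟨hz₀, hcz₀⟩, rfl⟩), fun y hy => ?_⟩
  rcases lt_trichotomy (g y) c with h | h | h
  · have := hupper ⟨y, ⟨hy, h⟩, rfl⟩
    rw [le_div_iff₀ (sub_pos.mpr h)] at this
    linarith
  · simpa [h] using hv y hy h.le
  · have := hlower ⟨y, ⟨hy, h⟩, rfl⟩
    rw [div_le_iff₀ (sub_pos.mpr h)] at this
    linarith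

/-! ### Exponential integrals -/

section ExponentialIntegrals

open Real ProbabilityTheory

variable {μ : Measure Ω}

lemma integral_lt_integral_of_ae_lt [NeZero μ] {f g : Ω → ℝ} (hf : Integrable f μ)
    (hg : Integrable g μ) (hfg : ∀ᵐ ω ∂μ, f ω < g ω) : ∫ ω, f ω ∂μ < ∫ ω, g ω ∂μ := by
  have hle : f ≤ᵐ[μ] g := hfg.mono fun _ h => h.le
  refine (integral_mono_ae hf hg hle).lt_of_ne fun heq => ?_
  obtain ⟨ω, hlt, heq⟩ := (hfg.and ((integral_eq_iff_of_ae_le hf hg hle).mp heq)).exists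
  exact hlt.ne heq

/-- Jensen's inequality, by integrating the tangent line of `exp` at the weighted mean of `f`. -/
lemma integral_mul_exp_div_le {w f : Ω → ℝ} (hw : 0 ≤ᵐ[μ] w) (hw_int : Integrable w μ)
    (hwf : Integrable (fun ω => w ω * f ω) μ) (hwexp : Integrable (fun ω => w ω * exp (f ω)) μ)
    (hpos : 0 < ∫ ω, w ω ∂μ) :
    (∫ ω, w ω ∂μ) * exp ((∫ ω, w ω * f ω ∂μ) / ∫ ω, w ω ∂μ) ≤ ∫ ω, w ω * exp (f ω) ∂μ := by
  set mean := (∫ ω, w ω * f ω ∂μ) / ∫ ω, w ω ∂μ with hmean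
  calc (∫ ω, w ω ∂μ) * exp mean
      = ∫ ω, exp mean * (w ω * (1 - mean) + w ω * f ω) ∂μ := by
        rw [integral_const_mul, integral_add (hw_int.mul_const _) hwf, integral_mul_const, hmean]
        field_simp
        ring
    _ ≤ ∫ ω, w ω * exp (f ω) ∂μ := by
        refine integral_mono_ae (((hw_int.mul_const _).add hwf).const_mul _) hwexp ?_
        filter_upwards [hw] with ω hω
        have tangent : exp mean * (f ω - mean + 1) ≤ exp (f ω) := by
          calc exp mean * (f ω - mean + 1) ≤ exp mean * exp (f ω - mean) := by
                gcongr
                exact add_one_le_exp _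
            _ = exp (f ω) := by rw [← exp_add, add_sub_cancel]
        calc exp mean * (w ω * (1 - mean) + w ω * f ω)
            = w ω * (exp mean * (f ω - mean + 1)) := by ring
          _ ≤ w ω * exp (f ω) := mul_le_mul_of_nonneg_left tangent hω

lemma convex_setOf_integrable_exp_mul (a : ℝ) :
    Convex ℝ {X : Ω → ℝ | AEMeasurable X μ ∧ Integrable (fun ω => exp (a * X ω)) μ} := by
  rintro X ⟨hXm, hX⟩ Y ⟨hYm, hY⟩ t s ht hs hts
  refine ⟨(hXm.const_smul t).add (hYm.const_smul s), ?_⟩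
  refine ((hX.const_mul t).add (hY.const_mul s)).mono' (by fun_prop) (ae_of_all _ fun ω => ?_)
  calc ‖exp (a * (t * X ω + s * Y ω))‖ = exp (t * (a * X ω) + s * (a * Y ω)) := by
        rw [norm_of_nonneg (exp_pos _).le]; ring_nf
    _ ≤ t * exp (a * X ω) + s * exp (a * Y ω) :=
        convexOn_exp.2 (mem_univ _) (mem_univ _) ht hs hts

/-- Hölder's inequality: subtracting `cgf X μ a` and `cgf Y μ a` in the exponents normalizes both
exponentials to integral one, and then the pointwise convexity of `exp` can be integrated. -/
lemma convexOn_cgf_left (a : ℝ) :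
    ConvexOn ℝ {X : Ω → ℝ | AEMeasurable X μ ∧ Integrable (fun ω => exp (a * X ω)) μ}
      (fun X => cgf X μ a) := by
  rcases eq_zero_or_neZero μ with rfl | _
  · simpa only [cgf_zero_measure, Pi.zero_apply] using
      convexOn_const 0 (convex_setOf_integrable_exp_mul a)
  refine ⟨convex_setOf_integrable_exp_mul a, fun X hX Y hY t s ht hs hts => ?_⟩
  have hmix := (convex_setOf_integrable_exp_mul a hX hY ht hs hts).2
  set bound := t * cgf X μ a + s * cgf Y μ a with hbound
  have normalized {Z : Ω → ℝ} (hZ : Integrable (fun ω => exp (a * Z ω)) μ) :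
      Integrable (fun ω => exp (a * Z ω - cgf Z μ a)) μ ∧
        ∫ ω, exp (a * Z ω - cgf Z μ a) ∂μ = 1 := by
    simp only [exp_sub, exp_cgf hZ]
    refine ⟨hZ.div_const _, ?_⟩
    rw [integral_div]
    exact div_self (mgf_pos_iff.mpr hZ).ne'
  obtain ⟨hX_int, hX_one⟩ := normalized hX.2
  obtain ⟨hY_int, hY_one⟩ := normalized hY.2
  have mgf_le : mgf (t • X + s • Y) μ a ≤ exp bound := by
    calc mgf (t • X + s • Y) μ a
        ≤ ∫ ω, exp bound * (t * exp (a * X ω - cgf X μ a) + s * exp (a * Y ω - cgf Y μ a)) ∂μ := by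
          refine integral_mono hmix (((hX_int.const_mul t).add (hY_int.const_mul s)).const_mul _)
            fun ω => ?_
          calc exp (a * (t * X ω + s * Y ω))
              = exp bound * exp (t * (a * X ω - cgf X μ a) + s * (a * Y ω - cgf Y μ a)) := by
                rw [← exp_add, hbound]; ring_nf
            _ ≤ _ := mul_le_mul_of_nonneg_left
                (convexOn_exp.2 (mem_univ _) (mem_univ _) ht hs hts) (exp_pos _).le
      _ = exp bound := by
          rw [integral_const_mul, integral_add (hX_int.const_mul t) (hY_int.const_mul s),
            integral_const_mul, integral_const_mul, hX_one, hY_one, mul_one, mul_one, hts, mul_one]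
  exact (log_le_iff_le_exp (mgf_pos_iff.mpr hmix)).mpr mgf_le

end ExponentialIntegrals

/-! ### Weighted entropic risk -/

section WeightedEntropicRisk

open ProbabilityTheory

variable {P : Measure Ω} {m : Measure ℝ} {a₀ a₁ : ℝ} {X Y : Ω → ℝ}

lemma entropic_eq_cgf (P : Measure Ω) (a : ℝ) (X : Ω → ℝ) :
    entropic P a X = 1 / a * cgf X P (-a) := rfl

lemma convex_setOf_Lpos (P : Measure Ω) : Convex ℝ {X | Lpos P X} := by
  rintro X ⟨hXm, hX⟩ Y ⟨hYm, hY⟩ t s ht hs -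
  refine ⟨(hXm.const_smul t).add (hYm.const_smul s), ?_⟩
  filter_upwards [hX, hY] with ω hXω hYω
  exact add_nonneg (mul_nonneg ht hXω) (mul_nonneg hs hYω)

lemma Lpos.integrable_exp_mul [IsFiniteMeasure P] (hX : Lpos P X) {t : ℝ} (ht : t ≤ 0) :
    Integrable (fun ω => Real.exp (t * X ω)) P := by
  refine .of_mem_Icc 0 1 (by have := hX.1; fun_prop) ?_
  filter_upwards [hX.2] with ω hω
  exact ⟨(Real.exp_pos _).le, Real.exp_le_one_iff.mpr (mul_nonpos_of_nonpos_of_nonneg ht hω)⟩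

lemma Lpos.monotoneOn_cgf [IsFiniteMeasure P] [NeZero P] (hX : Lpos P X) :
    MonotoneOn (cgf X P) (Iic 0) := by
  intro t ht u hu htu
  refine Real.log_le_log (mgf_pos_iff.mpr (hX.integrable_exp_mul ht)) ?_
  refine integral_mono_ae (hX.integrable_exp_mul ht) (hX.integrable_exp_mul hu) ?_
  filter_upwards [hX.2] with ω hω
  gcongr

lemma Lpos.entropic_mem_Icc [IsProbabilityMeasure P] (hX : Lpos P X) (ha₀ : 0 < a₀) {a : ℝ}
    (ha : a ∈ Icc a₀ a₁) : entropic P a X ∈ Icc (1 / a₀ * cgf X P (-a₁)) 0 := by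
  have ha_pos : 0 < a := ha₀.trans_le ha.1
  have ha₁_pos : 0 < a₁ := ha_pos.trans_le ha.2
  have cgf_le : cgf X P (-a₁) ≤ cgf X P (-a) :=
    hX.monotoneOn_cgf (neg_nonpos.mpr ha₁_pos.le) (neg_nonpos.mpr ha_pos.le) (neg_le_neg ha.2)
  have cgf_nonpos : cgf X P (-a) ≤ 0 := by
    simpa only [cgf_zero] using hX.monotoneOn_cgf (neg_nonpos.mpr ha_pos.le) self_mem_Iic
      (neg_nonpos.mpr ha_pos.le)
  rw [entropic_eq_cgf]
  refine ⟨?_, mul_nonpos_of_nonneg_of_nonpos (by positivity) cgf_nonpos⟩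
  calc 1 / a₀ * cgf X P (-a₁) ≤ 1 / a₀ * cgf X P (-a) := by gcongr
    _ ≤ 1 / a * cgf X P (-a) :=
        mul_le_mul_of_nonpos_right (one_div_le_one_div_of_le ha₀ ha.1) cgf_nonpos

lemma measurable_entropic [SFinite P] (hX : Measurable X) :
    Measurable (fun a => entropic P a X) := by
  have : Measurable fun a => ∫ ω, Real.exp (-a * X ω) ∂P :=
    (StronglyMeasurable.integral_prod_right (f := fun a ω => Real.exp (-a * X ω))
      (Measurable.stronglyMeasurable (by fun_prop))).measurable
  unfold entropic
  fun_prop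

lemma Lpos.integrableOn_entropic [IsProbabilityMeasure P] [IsFiniteMeasure m] (hX : Lpos P X)
    (ha₀ : 0 < a₀) : IntegrableOn (fun a => entropic P a X) (Icc a₀ a₁) m :=
  .of_mem_Icc _ _ (measurable_entropic hX.1).aemeasurable
    ((ae_restrict_mem measurableSet_Icc).mono fun _ ha => hX.entropic_mem_Icc ha₀ ha)

lemma convexOn_entropic [IsFiniteMeasure P] {a : ℝ} (ha : 0 ≤ a) :
    ConvexOn ℝ {X | Lpos P X} (entropic P a) :=
  ((convexOn_cgf_left (-a)).smul (one_div_nonneg.mpr ha)).subset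
    (fun _ hX => ⟨hX.1.aemeasurable, hX.integrable_exp_mul (neg_nonpos.mpr ha)⟩)
    (convex_setOf_Lpos P)

lemma convexOn_werm [IsProbabilityMeasure P] [IsFiniteMeasure m] (ha₀ : 0 < a₀) :
    ConvexOn ℝ {X | Lpos P X} (werm P m a₀ a₁) := by
  refine ⟨convex_setOf_Lpos P, fun X hX Y hY t s ht hs hts => ?_⟩
  have hX_int : Integrable (fun a => t * entropic P a X) (m.restrict (Icc a₀ a₁)) :=
    (hX.integrableOn_entropic ha₀).const_mul t
  have hY_int : Integrable (fun a => s * entropic P a Y) (m.restrict (Icc a₀ a₁)) :=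
    (hY.integrableOn_entropic ha₀).const_mul s
  calc werm P m a₀ a₁ (t • X + s • Y)
      ≤ ∫ a in Icc a₀ a₁, t * entropic P a X + s * entropic P a Y ∂m :=
        setIntegral_mono_on ((convex_setOf_Lpos P hX hY ht hs hts).integrableOn_entropic ha₀)
          (hX_int.add hY_int) measurableSet_Icc fun a ha =>
          (convexOn_entropic (ha₀.le.trans ha.1)).2 hX hY ht hs hts
    _ = t * werm P m a₀ a₁ X + s * werm P m a₀ a₁ Y := by
        rw [integral_add hX_int hY_int, integral_const_mul, integral_const_mul]
        rfl

lemma entropic_lt_entropic [IsFiniteMeasure P] [NeZero P] {a : ℝ} (ha : 0 < a) (hX : Lpos P X)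
    (hY : Lpos P Y) (hXY : ∀ᵐ ω ∂P, X ω < Y ω) : entropic P a Y < entropic P a X := by
  have hX_int := hX.integrable_exp_mul (neg_nonpos.mpr ha.le)
  have hY_int := hY.integrable_exp_mul (neg_nonpos.mpr ha.le)
  have mgf_lt : mgf Y P (-a) < mgf X P (-a) := by
    refine integral_lt_integral_of_ae_lt hY_int hX_int ?_
    filter_upwards [hXY] with ω hω
    exact Real.exp_lt_exp.mpr (mul_lt_mul_of_neg_left hω (neg_lt_zero.mpr ha))
  exact mul_lt_mul_of_pos_left (Real.log_lt_log (mgf_pos_iff.mpr hY_int) mgf_lt)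
    (one_div_pos.mpr ha)

lemma werm_lt_werm [IsProbabilityMeasure P] [IsFiniteMeasure m] (ha₀ : 0 < a₀)
    (hm : m (Icc a₀ a₁) ≠ 0) (hX : Lpos P X) (hY : Lpos P Y) (hXY : ∀ᵐ ω ∂P, X ω < Y ω) :
    werm P m a₀ a₁ Y < werm P m a₀ a₁ X := by
  have : NeZero (m.restrict (Icc a₀ a₁)) := ⟨Measure.restrict_eq_zero.not.mpr hm⟩
  refine integral_lt_integral_of_ae_lt (hY.integrableOn_entropic ha₀)
    (hX.integrableOn_entropic ha₀) ?_
  filter_upwards [ae_restrict_mem measurableSet_Icc] with a ha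
  exact entropic_lt_entropic (ha₀.trans_le ha.1) hX hY hXY

end WeightedEntropicRisk

/-! ### Budgets -/

section Budget

variable {P : Measure Ω} {ρ X : Ω → ℝ}

/-- The nonnegative payoffs of finite price. On this convex set the budget `E[ρX] ∈ [0, ∞]` is the
real number `∫ ω, ρ ω * X ω ∂P`, so that risk minimization becomes a convex program with
real-valued objective and constraint. -/
def finiteBudget (P : Measure Ω) (ρ : Ω → ℝ) : Set (Ω → ℝ) :=
  {X | Lpos P X ∧ Integrable (fun ω => ρ ω * X ω) P}

lemma zero_mem_finiteBudget : 0 ∈ finiteBudget P ρ :=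
  ⟨⟨measurable_zero, ae_of_all _ fun _ => le_rfl⟩, by simp⟩

lemma convexOn_integral_mul_finiteBudget :
    ConvexOn ℝ (finiteBudget P ρ) (fun X => ∫ ω, ρ ω * X ω ∂P) := by
  have integral_mix {X Y : Ω → ℝ} (hX : X ∈ finiteBudget P ρ) (hY : Y ∈ finiteBudget P ρ)
      (t s : ℝ) : Integrable (fun ω => ρ ω * (t * X ω + s * Y ω)) P ∧
        ∫ ω, ρ ω * (t * X ω + s * Y ω) ∂P = t * ∫ ω, ρ ω * X ω ∂P + s * ∫ ω, ρ ω * Y ω ∂P := by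
    simp only [mul_add, mul_left_comm (ρ _)]
    refine ⟨(hX.2.const_mul t).add (hY.2.const_mul s), ?_⟩
    rw [integral_add (hX.2.const_mul t) (hY.2.const_mul s), integral_const_mul, integral_const_mul]
  exact ⟨fun X hX Y hY t s ht hs hts =>
      ⟨convex_setOf_Lpos P hX.1 hY.1 ht hs hts, (integral_mix hX hY t s).1⟩,
    fun X hX Y hY t s _ _ _ => (integral_mix hX hY t s).2.le⟩

lemma Lpos.mul_nonneg_ae (hX : Lpos P X) (hρ : 0 ≤ᵐ[P] ρ) : 0 ≤ᵐ[P] fun ω => ρ ω * X ω := by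
  filter_upwards [hρ, hX.2] with ω hρω hXω using mul_nonneg hρω hXω

lemma budget_eq_ofReal (hρ : 0 ≤ᵐ[P] ρ) (hX : X ∈ finiteBudget P ρ) :
    budget P ρ X = ENNReal.ofReal (∫ ω, ρ ω * X ω ∂P) :=
  (ofReal_integral_eq_lintegral_ofReal hX.2 (hX.1.mul_nonneg_ae hρ)).symm

lemma Lpos.integral_mul_nonneg (hX : Lpos P X) (hρ : 0 ≤ᵐ[P] ρ) : 0 ≤ ∫ ω, ρ ω * X ω ∂P :=
  integral_nonneg_of_ae (hX.mul_nonneg_ae hρ)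

lemma budget_ne_top_iff (hρm : AEMeasurable ρ P) (hρ : 0 ≤ᵐ[P] ρ) (hX : Lpos P X) :
    budget P ρ X ≠ ⊤ ↔ X ∈ finiteBudget P ρ := by
  have hmeas : AEStronglyMeasurable (fun ω => ρ ω * X ω) P :=
    (hρm.mul hX.1.aemeasurable).aestronglyMeasurable
  rw [budget, lintegral_ofReal_ne_top_iff_integrable hmeas (hX.mul_nonneg_ae hρ)]
  exact (and_iff_right hX).symm

lemma feasible_iff (hρm : AEMeasurable ρ P) (hρ : 0 ≤ᵐ[P] ρ) {x : ℝ} (hx : 0 ≤ x) :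
    feasible P ρ x X ↔ X ∈ finiteBudget P ρ ∧ ∫ ω, ρ ω * X ω ∂P ≤ x := by
  constructor
  · rintro ⟨hX, hle⟩
    have hfin := (budget_ne_top_iff hρm hρ hX).mp (ne_top_of_le_ne_top ENNReal.ofReal_ne_top hle)
    rw [budget_eq_ofReal hρ hfin, ENNReal.ofReal_le_ofReal_iff hx] at hle
    exact ⟨hfin, hle⟩
  · rintro ⟨hfin, hle⟩
    exact ⟨hfin.1, (budget_eq_ofReal hρ hfin).trans_le (ENNReal.ofReal_le_ofReal hle)⟩

lemma budget_eq_ofReal_iff (hρm : AEMeasurable ρ P) (hρ : 0 ≤ᵐ[P] ρ) (hX : Lpos P X) {x : ℝ}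
    (hx : 0 ≤ x) :
    budget P ρ X = ENNReal.ofReal x ↔ X ∈ finiteBudget P ρ ∧ ∫ ω, ρ ω * X ω ∂P = x := by
  constructor
  · intro heq
    have hfin := (budget_ne_top_iff hρm hρ hX).mp (heq ▸ ENNReal.ofReal_ne_top)
    rw [budget_eq_ofReal hρ hfin,
      ENNReal.ofReal_eq_ofReal_iff (hX.integral_mul_nonneg hρ) hx] at heq
    exact ⟨hfin, heq⟩
  · rintro ⟨hfin, rfl⟩
    exact budget_eq_ofReal hρ hfin

lemma add_div_mem_finiteBudget [IsProbabilityMeasure P] (hρm : Measurable ρ)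
    (hρ : ∀ᵐ ω ∂P, 0 < ρ ω) (hX : X ∈ finiteBudget P ρ) {δ : ℝ} (hδ : 0 ≤ δ) :
    (fun ω => X ω + δ / ρ ω) ∈ finiteBudget P ρ ∧
      ∫ ω, ρ ω * (X ω + δ / ρ ω) ∂P = ∫ ω, ρ ω * X ω ∂P + δ := by
  have hcost : (fun ω => ρ ω * (X ω + δ / ρ ω)) =ᵐ[P] fun ω => ρ ω * X ω + δ := by
    filter_upwards [hρ] with ω hω
    rw [mul_add, mul_div_cancel₀ _ hω.ne']
  refine ⟨⟨⟨hX.1.1.add (measurable_const.div hρm), ?_⟩,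
    (integrable_congr hcost).mpr (hX.2.add (integrable_const δ))⟩, ?_⟩
  · filter_upwards [hρ, hX.1.2] with ω hρω hXω using add_nonneg hXω (div_nonneg hδ hρω.le)
  · rw [integral_congr_ae hcost, integral_add hX.2 (integrable_const δ)]
    simp

end Budget

/-! ### Lagrangian duality -/

section Duality

variable {P : Measure Ω} {m : Measure ℝ} {a₀ a₁ : ℝ} {ρ X : Ω → ℝ} {x lam : ℝ}

lemma integrable_min_one [IsFiniteMeasure P] (hρm : AEMeasurable ρ P) (hρ : 0 ≤ᵐ[P] ρ) :
    Integrable (fun ω => min (ρ ω) 1) P :=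
  .of_mem_Icc 0 1 (by fun_prop) (hρ.mono fun _ h => ⟨le_min h zero_le_one, min_le_right _ _⟩)

lemma integral_min_one_pos [IsFiniteMeasure P] [NeZero P] (hρm : AEMeasurable ρ P)
    (hρ : ∀ᵐ ω ∂P, 0 < ρ ω) : 0 < ∫ ω, min (ρ ω) 1 ∂P := by
  simpa using integral_lt_integral_of_ae_lt (integrable_zero _ _ _)
    (integrable_min_one hρm (hρ.mono fun _ h => h.le)) (hρ.mono fun _ h => lt_min h one_pos)

/-- The weight `min ρ 1 ≤ 1` makes Jensen's inequality applicable to `E[e^{-bX}]`, and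
`min ρ 1 ≤ ρ` controls the weighted mean of `X` by the budget. -/
lemma integral_min_mul_exp_le_mgf [IsFiniteMeasure P] [NeZero P] (hρm : AEMeasurable ρ P)
    (hρ : ∀ᵐ ω ∂P, 0 < ρ ω) (hX : X ∈ finiteBudget P ρ) (hXx : ∫ ω, ρ ω * X ω ∂P ≤ x) {b : ℝ}
    (hb : 0 ≤ b) :
    (∫ ω, min (ρ ω) 1 ∂P) * Real.exp (-b * x / ∫ ω, min (ρ ω) 1 ∂P)
      ≤ ProbabilityTheory.mgf X P (-b) := by
  have hXm : AEMeasurable X P := hX.1.1.aemeasurable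
  have hexp := hX.1.integrable_exp_mul (neg_nonpos.mpr hb)
  have hw : ∀ᵐ ω ∂P, 0 ≤ min (ρ ω) 1 := hρ.mono fun _ h => le_min h.le zero_le_one
  have hw_pos := integral_min_one_pos hρm hρ
  have hwX_le : ∀ᵐ ω ∂P, min (ρ ω) 1 * X ω ≤ ρ ω * X ω := by
    filter_upwards [hX.1.2] with ω hω using mul_le_mul_of_nonneg_right (min_le_left _ _) hω
  have hwX_int : Integrable (fun ω => min (ρ ω) 1 * X ω) P := by
    refine integrable_of_le_of_le (by fun_prop) ?_ hwX_le (integrable_zero _ _ _) hX.2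
    filter_upwards [hw, hX.1.2] with ω hwω hω using mul_nonneg hwω hω
  have hwexp_le : ∀ᵐ ω ∂P, min (ρ ω) 1 * Real.exp (-b * X ω) ≤ Real.exp (-b * X ω) :=
    ae_of_all _ fun ω => mul_le_of_le_one_left (Real.exp_pos _).le (min_le_right _ _)
  have hwexp_int : Integrable (fun ω => min (ρ ω) 1 * Real.exp (-b * X ω)) P := by
    refine integrable_of_le_of_le (by fun_prop) ?_ hwexp_le (integrable_zero _ _ _) hexp
    exact hw.mono fun ω hwω => mul_nonneg hwω (Real.exp_pos _).le
  have mean_le : -b * x ≤ ∫ ω, min (ρ ω) 1 * (-b * X ω) ∂P := by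
    simp only [mul_left_comm (min _ _)]
    rw [integral_const_mul]
    exact mul_le_mul_of_nonpos_left ((integral_mono_ae hwX_int hX.2 hwX_le).trans hXx)
      (neg_nonpos.mpr hb)
  calc (∫ ω, min (ρ ω) 1 ∂P) * Real.exp (-b * x / ∫ ω, min (ρ ω) 1 ∂P)
      ≤ (∫ ω, min (ρ ω) 1 ∂P)
          * Real.exp ((∫ ω, min (ρ ω) 1 * (-b * X ω) ∂P) / ∫ ω, min (ρ ω) 1 ∂P) := by gcongr
    _ ≤ ∫ ω, min (ρ ω) 1 * Real.exp (-b * X ω) ∂P :=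
        integral_mul_exp_div_le hw (integrable_min_one hρm (hρ.mono fun _ h => h.le))
          (by simpa only [mul_left_comm (min _ _)] using hwX_int.const_mul (-b)) hwexp_int hw_pos
    _ ≤ ProbabilityTheory.mgf X P (-b) := integral_mono_ae hwexp_int hexp hwexp_le

lemma bddBelow_werm_feasible [IsProbabilityMeasure P] [IsFiniteMeasure m] (ha₀ : 0 < a₀)
    (ha₀₁ : a₀ ≤ a₁) (hρm : AEMeasurable ρ P) (hρ : ∀ᵐ ω ∂P, 0 < ρ ω) (hx : 0 ≤ x) :
    BddBelow (werm P m a₀ a₁ '' {X | feasible P ρ x X}) := by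
  set mgfBound := (∫ ω, min (ρ ω) 1 ∂P) * Real.exp (-a₁ * x / ∫ ω, min (ρ ω) 1 ∂P)
  have mgfBound_pos : 0 < mgfBound := mul_pos (integral_min_one_pos hρm hρ) (Real.exp_pos _)
  refine ⟨∫ _ in Icc a₀ a₁, 1 / a₀ * Real.log mgfBound ∂m, ?_⟩
  rintro _ ⟨X, hX, rfl⟩
  obtain ⟨hXfin, hXx⟩ := (feasible_iff hρm (hρ.mono fun _ h => h.le) hx).mp hX
  have hmgf := integral_min_mul_exp_le_mgf hρm hρ hXfin hXx (ha₀.le.trans ha₀₁)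
  refine setIntegral_mono_on (integrable_const _) (hX.1.integrableOn_entropic ha₀)
    measurableSet_Icc fun a ha => ?_
  calc 1 / a₀ * Real.log mgfBound ≤ 1 / a₀ * ProbabilityTheory.cgf X P (-a₁) := by
        gcongr
        exact Real.log_le_log mgfBound_pos hmgf
    _ ≤ entropic P a X := (hX.1.entropic_mem_Icc ha₀ ha).1

lemma forall_robj_le_iff (hρm : AEMeasurable ρ P) (hρ : 0 ≤ᵐ[P] ρ) (hlam : 0 < lam)
    (hX : X ∈ finiteBudget P ρ) :
    (∀ Y, Lpos P Y → robj P m a₀ a₁ ρ lam X ≤ robj P m a₀ a₁ ρ lam Y) ↔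
      ∀ Y ∈ finiteBudget P ρ, werm P m a₀ a₁ X
        ≤ werm P m a₀ a₁ Y + lam * (∫ ω, ρ ω * Y ω ∂P - ∫ ω, ρ ω * X ω ∂P) := by
  have robj_eq {Y : Ω → ℝ} (hY : Y ∈ finiteBudget P ρ) : robj P m a₀ a₁ ρ lam Y
      = ((werm P m a₀ a₁ Y + lam * ∫ ω, ρ ω * Y ω ∂P : ℝ) : EReal) := by
    rw [robj, budget_eq_ofReal hρ hY, EReal.coe_ennreal_ofReal,
      max_eq_left (hY.1.integral_mul_nonneg hρ)]
    norm_cast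
  constructor
  · intro hmin Y hY
    have := hmin Y hY.1
    rw [robj_eq hX, robj_eq hY, EReal.coe_le_coe_iff] at this
    linarith
  · intro hsupp Y hY
    by_cases hYfin : Y ∈ finiteBudget P ρ
    · rw [robj_eq hX, robj_eq hYfin, EReal.coe_le_coe_iff]
      linarith [hsupp Y hYfin]
    · have htop : budget P ρ Y = ⊤ :=
        not_not.mp (mt (budget_ne_top_iff hρm hρ hY).mp hYfin)
      rw [robj, robj, htop, EReal.coe_ennreal_top, EReal.coe_mul_top_of_pos hlam,
        EReal.coe_add_top]
      exact le_top

lemma exists_werm_lt [IsProbabilityMeasure P] [IsFiniteMeasure m] (ha₀ : 0 < a₀)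
    (hm : m (Icc a₀ a₁) ≠ 0) (hρm : Measurable ρ) (hρ : ∀ᵐ ω ∂P, 0 < ρ ω)
    (hX : X ∈ finiteBudget P ρ) {δ : ℝ} (hδ : 0 < δ) :
    ∃ Y ∈ finiteBudget P ρ, ∫ ω, ρ ω * Y ω ∂P = ∫ ω, ρ ω * X ω ∂P + δ ∧
      werm P m a₀ a₁ Y < werm P m a₀ a₁ X := by
  obtain ⟨hY, hcost⟩ := add_div_mem_finiteBudget hρm hρ hX hδ.le
  refine ⟨_, hY, hcost, werm_lt_werm ha₀ hm hX.1 hY.1 ?_⟩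
  filter_upwards [hρ] with ω hω using lt_add_of_pos_right _ (div_pos hδ hω)

lemma integral_mul_eq_of_minimizer [IsProbabilityMeasure P] [IsFiniteMeasure m] (ha₀ : 0 < a₀)
    (hm : m (Icc a₀ a₁) ≠ 0) (hρm : Measurable ρ) (hρ : ∀ᵐ ω ∂P, 0 < ρ ω)
    (hX : X ∈ finiteBudget P ρ) (hXx : ∫ ω, ρ ω * X ω ∂P ≤ x)
    (hopt : ∀ Y ∈ finiteBudget P ρ, ∫ ω, ρ ω * Y ω ∂P ≤ x → werm P m a₀ a₁ X ≤ werm P m a₀ a₁ Y) :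
    ∫ ω, ρ ω * X ω ∂P = x := by
  by_contra hne
  obtain ⟨Y, hY, hcost, hlt⟩ :=
    exists_werm_lt ha₀ hm hρm hρ hX (sub_pos.mpr (lt_of_le_of_ne hXx hne))
  exact (hopt Y hY (by linarith)).not_gt hlt

lemma exists_supporting_multiplier [IsProbabilityMeasure P] [IsFiniteMeasure m] (ha₀ : 0 < a₀)
    (hm : m (Icc a₀ a₁) ≠ 0) (hρm : Measurable ρ) (hρ : ∀ᵐ ω ∂P, 0 < ρ ω) (hx : 0 < x)
    (hX : X ∈ finiteBudget P ρ)
    (hopt : ∀ Y ∈ finiteBudget P ρ, ∫ ω, ρ ω * Y ω ∂P ≤ x → werm P m a₀ a₁ X ≤ werm P m a₀ a₁ Y) :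
    ∃ lam : ℝ, 0 < lam ∧ ∀ Y ∈ finiteBudget P ρ,
      werm P m a₀ a₁ X ≤ werm P m a₀ a₁ Y + lam * (∫ ω, ρ ω * Y ω ∂P - x) := by
  obtain ⟨Z, hZ, -, hlt⟩ := exists_werm_lt ha₀ hm hρm hρ hX one_pos
  have hconvex := convexOn_integral_mul_finiteBudget (P := P) (ρ := ρ)
  exact exists_pos_multiplier ((convexOn_werm ha₀).subset (fun _ hY => hY.1) hconvex.1) hconvex hopt
    ⟨0, zero_mem_finiteBudget, by simpa using hx⟩ ⟨Z, hZ, hlt⟩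

lemma exists_lagrange_multiplier [IsProbabilityMeasure P] [IsFiniteMeasure m] (ha₀ : 0 < a₀)
    (hm : m (Icc a₀ a₁) ≠ 0) (hρm : Measurable ρ) (hρ : ∀ᵐ ω ∂P, 0 < ρ ω) (hx : 0 < x)
    (hX : feasible P ρ x X)
    (hopt : ∀ Y, feasible P ρ x Y → werm P m a₀ a₁ X ≤ werm P m a₀ a₁ Y) :
    ∃ lam : ℝ, 0 < lam ∧
      (∀ Y, Lpos P Y → robj P m a₀ a₁ ρ lam X ≤ robj P m a₀ a₁ ρ lam Y) ∧
      budget P ρ X = ENNReal.ofReal x := by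
  have hρ_nonneg : 0 ≤ᵐ[P] ρ := hρ.mono fun _ h => h.le
  have feasible_iff_real {Y : Ω → ℝ} := feasible_iff (X := Y) hρm.aemeasurable hρ_nonneg hx.le
  obtain ⟨hXfin, hXx⟩ := feasible_iff_real.mp hX
  have hopt_real : ∀ Y ∈ finiteBudget P ρ, ∫ ω, ρ ω * Y ω ∂P ≤ x →
      werm P m a₀ a₁ X ≤ werm P m a₀ a₁ Y :=
    fun Y hY hYx => hopt Y (feasible_iff_real.mpr ⟨hY, hYx⟩)
  have hbind := integral_mul_eq_of_minimizer ha₀ hm hρm hρ hXfin hXx hopt_real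
  obtain ⟨lam, hlam, hsupp⟩ := exists_supporting_multiplier ha₀ hm hρm hρ hx hXfin hopt_real
  refine ⟨lam, hlam, (forall_robj_le_iff hρm.aemeasurable hρ_nonneg hlam hXfin).mpr ?_,
    (budget_eq_ofReal_iff hρm.aemeasurable hρ_nonneg hX.1 hx.le).mpr ⟨hXfin, hbind⟩⟩
  rwa [hbind]

lemma werm_sub_le_of_robj_le (hρm : AEMeasurable ρ P) (hρ : 0 ≤ᵐ[P] ρ) (hx : 0 ≤ x)
    (hlam : 0 < lam) (hX : Lpos P X)
    (hmin : ∀ Y, Lpos P Y → robj P m a₀ a₁ ρ lam X ≤ robj P m a₀ a₁ ρ lam Y)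
    (hbind : budget P ρ X = ENNReal.ofReal x) {y : ℝ} (hy : 0 ≤ y) {Y : Ω → ℝ}
    (hY : feasible P ρ y Y) : werm P m a₀ a₁ X - lam * (y - x) ≤ werm P m a₀ a₁ Y := by
  obtain ⟨hXfin, rfl⟩ := (budget_eq_ofReal_iff hρm hρ hX hx).mp hbind
  obtain ⟨hYfin, hYy⟩ := (feasible_iff hρm hρ hy).mp hY
  have hsupp := (forall_robj_le_iff hρm hρ hlam hXfin).mp hmin Y hYfin
  linarith [mul_le_mul_of_nonneg_left hYy hlam.le]

lemma gamma1_le_werm [IsProbabilityMeasure P] [IsFiniteMeasure m] (ha₀ : 0 < a₀) (ha₀₁ : a₀ ≤ a₁)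
    (hρm : AEMeasurable ρ P) (hρ : ∀ᵐ ω ∂P, 0 < ρ ω) (hx : 0 ≤ x) (hX : feasible P ρ x X) :
    gamma1 P m a₀ a₁ ρ x ≤ werm P m a₀ a₁ X :=
  csInf_le (bddBelow_werm_feasible ha₀ ha₀₁ hρm hρ hx) ⟨X, hX, rfl⟩

lemma feasible_zero : feasible P ρ x 0 := ⟨zero_mem_finiteBudget (ρ := ρ).1, by simp [budget]⟩

lemma le_gamma1 {c : ℝ} (hc : ∀ Y, feasible P ρ x Y → c ≤ werm P m a₀ a₁ Y) :
    c ≤ gamma1 P m a₀ a₁ ρ x :=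
  le_csInf ⟨_, mem_image_of_mem _ feasible_zero⟩ (forall_mem_image.mpr hc)

end Duality

theorem risk_minimization_lagrangian_general (P : Measure Ω) [IsProbabilityMeasure P]
    (a₀ a₁ : ℝ) (ha₀ : 0 < a₀) (m : Measure ℝ) [IsFiniteMeasure m] (hm : m (Set.Icc a₀ a₁) ≠ 0)
    (ρ : Ω → ℝ) (hmρ : Measurable ρ) (hρ0 : ∀ᵐ ω ∂P, 0 < ρ ω)
    (x : ℝ) (hx : 0 < x) (X : Ω → ℝ) (hX : Lpos P X) :
    ((feasible P ρ x X ∧ werm P m a₀ a₁ X = gamma1 P m a₀ a₁ ρ x) ↔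
      ∃ lam : ℝ, 0 < lam ∧
        (∀ Y, Lpos P Y → robj P m a₀ a₁ ρ lam X ≤ robj P m a₀ a₁ ρ lam Y) ∧
        budget P ρ X = ENNReal.ofReal x) ∧
    (∀ lam : ℝ, 0 < lam →
      (∀ Y, Lpos P Y → robj P m a₀ a₁ ρ lam X ≤ robj P m a₀ a₁ ρ lam Y) →
      budget P ρ X = ENNReal.ofReal x →
      ∀ y : ℝ, 0 < y →
        gamma1 P m a₀ a₁ ρ x - lam * (y - x) ≤ gamma1 P m a₀ a₁ ρ y) := by
  have ha₀₁ : a₀ ≤ a₁ := nonempty_Icc.mp (nonempty_of_measure_ne_zero hm)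
  have hρm := hmρ.aemeasurable (μ := P)
  have hρ : 0 ≤ᵐ[P] ρ := hρ0.mono fun _ h => h.le
  have gamma1_le {Y : Ω → ℝ} := gamma1_le_werm (m := m) (X := Y) ha₀ ha₀₁ hρm hρ0 hx.le
  refine ⟨⟨?_, ?_⟩, ?_⟩
  · rintro ⟨hfeas, hval⟩
    exact exists_lagrange_multiplier ha₀ hm hmρ hρ0 hx hfeas
      fun Y hY => hval.trans_le (gamma1_le hY)
  · rintro ⟨lam, hlam, hmin, hbind⟩
    have hfeas : feasible P ρ x X := ⟨hX, hbind.le⟩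
    refine ⟨hfeas, le_antisymm (le_gamma1 fun Y hY => ?_) (gamma1_le hfeas)⟩
    simpa using werm_sub_le_of_robj_le hρm hρ hx.le hlam hX hmin hbind hx.le hY
  · intro lam hlam hmin hbind y hy
    refine le_gamma1 fun Y hY => ?_
    calc gamma1 P m a₀ a₁ ρ x - lam * (y - x) ≤ werm P m a₀ a₁ X - lam * (y - x) :=
          sub_le_sub_right (gamma1_le ⟨hX, hbind.le⟩) _
      _ ≤ werm P m a₀ a₁ Y := werm_sub_le_of_robj_le hρm hρ hx.le hlam hX hmin hbind hy.le hY

/-- Lagrangian characterization of the risk minimizer: `X*` solves the risk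
minimization problem over `𝒳(x)` iff there is `λ* > 0` such that `X*` minimizes
`h(X) + λ* E[ρX]` over `L⁰₊` and `E[ρX*] = x`; in that case `-λ*` is a subgradient of `γ₁`
at `x`. -/
theorem risk_minimization_lagrangian (P : Measure Ω) [IsProbabilityMeasure P]
    (a₀ a₁ : ℝ) (ha₀ : 0 < a₀) (ha₀₁ : a₀ < a₁)
    (m : Measure ℝ) [IsProbabilityMeasure m] (hm : m (Set.Icc a₀ a₁) = 1)
    (ρ : Ω → ℝ) (hmρ : Measurable ρ) (hρ0 : ∀ᵐ ω ∂P, 0 < ρ ω) (hρint : Integrable ρ P)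
    (x : ℝ) (hx : 0 < x) (X : Ω → ℝ) (hX : Lpos P X) :
    ((feasible P ρ x X ∧ werm P m a₀ a₁ X = gamma1 P m a₀ a₁ ρ x) ↔
      ∃ lam : ℝ, 0 < lam ∧
        (∀ Y, Lpos P Y → robj P m a₀ a₁ ρ lam X ≤ robj P m a₀ a₁ ρ lam Y) ∧
        budget P ρ X = ENNReal.ofReal x) ∧
    (∀ lam : ℝ, 0 < lam →
      (∀ Y, Lpos P Y → robj P m a₀ a₁ ρ lam X ≤ robj P m a₀ a₁ ρ lam Y) →
      budget P ρ X = ENNReal.ofReal x →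
      ∀ y : ℝ, 0 < y →
        gamma1 P m a₀ a₁ ρ x - lam * (y - x) ≤ gamma1 P m a₀ a₁ ρ y) :=
  risk_minimization_lagrangian_general P a₀ a₁ ha₀ m (by simp [hm]) ρ hmρ hρ0 x hx X hX
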